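/- Let M be a cancellative noetherian monoid in which left- and right-divisibility are partial orders, with a Garside element Δ (a balanced element whose divisor set generates M). If δ ∈ Div(Δ) is balanced and the submonoid M_δ generated by Div(δ) satisfies M_δ ∩ Div(Δ) = Div(δ), then M_δ is itself a Garside monoid with Garside element δ. -/

import Mathlib

section Garside

variable {M : Type*} [Monoid M]

/-- Left divisibility: `a` left-divides `b`. -/
def LDvd (a b : M) : Prop := ∃ c, b = a * c

/-- Right divisibility: `a` right-divides `b`. -/
def RDvd (a b : M) : Prop := ∃ c, b = c * a

/-- The set of left divisors of `d`. -/
def LDiv (d : M) : Set M := {a | LDvd a d}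

/-- The set of right divisors of `d`. -/
def RDiv (d : M) : Set M := {a | RDvd a d}

/-- An element is balanced if its left and right divisors coincide. -/
def BalancedElem (d : M) : Prop := LDiv d = RDiv d

/-- `l` is a least common multiple of `a` and `b` for left divisibility (a right lcm). -/
def IsLcmL (a b l : M) : Prop := LDvd a l ∧ LDvd b l ∧ ∀ m, LDvd a m → LDvd b m → LDvd l m

/-- `l` is a least common multiple of `a` and `b` for right divisibility (a left lcm). -/
def IsLcmR (a b l : M) : Prop := RDvd a l ∧ RDvd b l ∧ ∀ m, RDvd a m → RDvd b m → RDvd l m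

/-- Cancellativity: `xyz = xtz` implies `y = t`. -/
def CancellativeMonoid (M : Type*) [Monoid M] : Prop :=
  ∀ x y z t : M, x * y * z = x * t * z → y = t

/-- Noetherianity: well-foundedness of strict left and right divisibility. -/
def NoetherianMonoid (M : Type*) [Monoid M] : Prop :=
  WellFounded (fun a b : M => LDvd a b ∧ ¬ LDvd b a) ∧
    WellFounded (fun a b : M => RDvd a b ∧ ¬ RDvd b a)

/-- `M` is locally Garside: cancellative, noetherian, and two elements admit a common
multiple for left (resp. right) divisibility iff they admit an lcm. -/
def LocallyGarside (M : Type*) [Monoid M] : Prop :=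
  CancellativeMonoid M ∧ NoetherianMonoid M ∧
    (∀ a b : M, (∃ m, LDvd a m ∧ LDvd b m) ↔ (∃ l, IsLcmL a b l)) ∧
    (∀ a b : M, (∃ m, RDvd a m ∧ RDvd b m) ↔ (∃ l, IsLcmR a b l))

/-- `M` is a Garside monoid with Garside element `d`: it is locally Garside, `d` is
balanced and the divisors of `d` generate `M`. -/
def IsGarsideMonoidWith (d : M) : Prop :=
  LocallyGarside M ∧ BalancedElem d ∧ Submonoid.closure (LDiv d) = ⊤

end Garside

section GarsideHelpers

variable {M : Type*} [Monoid M]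

theorem lcmL_one_left (y : M) : IsLcmL 1 y (1 * y) :=
  ⟨⟨y, rfl⟩, ⟨1, by simp⟩, fun m _ h => by simpa using h⟩

theorem lcmR_one_left (y : M) : IsLcmR 1 y (y * 1) :=
  ⟨⟨y, rfl⟩, ⟨1, by simp⟩, fun m _ h => by simpa using h⟩

theorem IsLcmL.symm' {a b l : M} (h : IsLcmL a b l) : IsLcmL b a l :=
  ⟨h.2.1, h.1, fun m h1 h2 => h.2.2 m h2 h1⟩

theorem IsLcmR.symm' {a b l : M} (h : IsLcmR a b l) : IsLcmR b a l :=
  ⟨h.2.1, h.1, fun m h1 h2 => h.2.2 m h2 h1⟩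

theorem lcmL_comp (hc : ∀ x y t : M, x * y = x * t → y = t)
    {x₁ x₂ y c d c' d' : M} (e1 : x₁ * c = y * d) (h1 : IsLcmL x₁ y (x₁ * c))
    (e2 : x₂ * c' = c * d') (h2 : IsLcmL x₂ c (x₂ * c')) :
    (x₁ * x₂) * c' = y * (d * d') ∧ IsLcmL (x₁ * x₂) y ((x₁ * x₂) * c') := by
  have e : (x₁ * x₂) * c' = y * (d * d') := by
    rw [mul_assoc, e2, ← mul_assoc, e1, mul_assoc]
  refine ⟨e, ⟨c', rfl⟩, ⟨_, e⟩, ?_⟩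
  rintro m ⟨f, rfl⟩ hy
  obtain ⟨g, hg⟩ := h1.2.2 _ ⟨x₂ * f, by rw [mul_assoc]⟩ hy
  rw [mul_assoc, mul_assoc] at hg
  obtain ⟨k, hk⟩ := h2.2.2 (x₂ * f) ⟨f, rfl⟩ ⟨g, hc _ _ _ hg⟩
  exact ⟨k, by rw [mul_assoc, hk]; simp only [mul_assoc]⟩

theorem lcmR_comp (hc : ∀ x y t : M, y * x = t * x → y = t)
    {x₁ x₂ y c d c' d' : M} (e1 : c * x₁ = d * y) (h1 : IsLcmR x₁ y (c * x₁))
    (e2 : c' * x₂ = d' * c) (h2 : IsLcmR x₂ c (c' * x₂)) :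
    c' * (x₂ * x₁) = (d' * d) * y ∧ IsLcmR (x₂ * x₁) y (c' * (x₂ * x₁)) := by
  have e : c' * (x₂ * x₁) = (d' * d) * y := by
    rw [← mul_assoc, e2, mul_assoc, e1, mul_assoc]
  refine ⟨e, ⟨c', rfl⟩, ⟨_, e⟩, ?_⟩
  rintro m ⟨f, rfl⟩ hy
  obtain ⟨g, hg⟩ := h1.2.2 _ ⟨f * x₂, by rw [mul_assoc]⟩ hy
  rw [← mul_assoc, ← mul_assoc] at hg
  obtain ⟨k, hk⟩ := h2.2.2 (f * x₂) ⟨f, rfl⟩ ⟨g, hc _ _ _ hg⟩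
  exact ⟨k, by rw [← mul_assoc, hk]; simp only [mul_assoc]⟩

theorem gridL (hc : ∀ x y t : M, x * y = x * t → y = t) (D : Set M)
    (hD : ∀ x ∈ D, ∀ y ∈ D, ∃ c ∈ D, ∃ d ∈ D, x * c = y * d ∧ IsLcmL x y (x * c))
    (x : M) (hx : x ∈ Submonoid.closure D) (y : M) (hy : y ∈ Submonoid.closure D) :
    ∃ c ∈ Submonoid.closure D, ∃ d ∈ Submonoid.closure D,
      x * c = y * d ∧ IsLcmL x y (x * c) := by
  have step : ∀ y ∈ Submonoid.closure D, ∀ x ∈ D, ∃ c ∈ D, ∃ d ∈ Submonoid.closure D,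
      y * c = x * d ∧ IsLcmL y x (y * c) := by
    intro y hy
    induction hy using Submonoid.closure_induction with
    | mem y hy =>
      intro x hx
      obtain ⟨c, h1, d, h2, h⟩ := hD y hy x hx
      exact ⟨c, h1, d, Submonoid.subset_closure h2, h⟩
    | one => exact fun x hx => ⟨x, hx, 1, one_mem _, by simp, lcmL_one_left x⟩
    | mul y₁ y₂ _ _ ih1 ih2 =>
      intro x hx
      obtain ⟨c, hc1, d, hd1, e1, l1⟩ := ih1 x hx
      obtain ⟨c', hc2, d', hd2, e2, l2⟩ := ih2 c hc1
      exact ⟨c', hc2, d * d', mul_mem hd1 hd2, lcmL_comp hc e1 l1 e2 l2⟩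
  induction hx using Submonoid.closure_induction generalizing y with
  | mem x hx =>
    obtain ⟨c, h1, d, h2, e, h⟩ := step y hy x hx
    exact ⟨d, h2, c, Submonoid.subset_closure h1, e.symm, e ▸ h.symm'⟩
  | one => exact ⟨y, hy, 1, one_mem _, by simp, lcmL_one_left y⟩
  | mul x₁ x₂ _ _ ih1 ih2 =>
    obtain ⟨c, hc1, d, hd1, e1, l1⟩ := ih1 y hy
    obtain ⟨c', hc2, d', hd2, e2, l2⟩ := ih2 c hc1
    exact ⟨c', hc2, d * d', mul_mem hd1 hd2, lcmL_comp hc e1 l1 e2 l2⟩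

theorem gridR (hc : ∀ x y t : M, y * x = t * x → y = t) (D : Set M)
    (hD : ∀ x ∈ D, ∀ y ∈ D, ∃ c ∈ D, ∃ d ∈ D, c * x = d * y ∧ IsLcmR x y (c * x))
    (x : M) (hx : x ∈ Submonoid.closure D) (y : M) (hy : y ∈ Submonoid.closure D) :
    ∃ c ∈ Submonoid.closure D, ∃ d ∈ Submonoid.closure D,
      c * x = d * y ∧ IsLcmR x y (c * x) := by
  have step : ∀ y ∈ Submonoid.closure D, ∀ x ∈ D, ∃ c ∈ D, ∃ d ∈ Submonoid.closure D,
      c * y = d * x ∧ IsLcmR y x (c * y) := by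
    intro y hy
    induction hy using Submonoid.closure_induction with
    | mem y hy =>
      intro x hx
      obtain ⟨c, h1, d, h2, h⟩ := hD y hy x hx
      exact ⟨c, h1, d, Submonoid.subset_closure h2, h⟩
    | one => exact fun x hx => ⟨x, hx, 1, one_mem _, by simp, lcmR_one_left x⟩
    | mul y₂ y₁ _ _ ih2 ih1 =>
      intro x hx
      obtain ⟨c, hc1, d, hd1, e1, l1⟩ := ih1 x hx
      obtain ⟨c', hc2, d', hd2, e2, l2⟩ := ih2 c hc1
      exact ⟨c', hc2, d' * d, mul_mem hd2 hd1, lcmR_comp hc e1 l1 e2 l2⟩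
  induction hx using Submonoid.closure_induction generalizing y with
  | mem x hx =>
    obtain ⟨c, h1, d, h2, e, h⟩ := step y hy x hx
    exact ⟨d, h2, c, Submonoid.subset_closure h1, e.symm, e ▸ h.symm'⟩
  | one => exact ⟨y, hy, 1, one_mem _, by simp, lcmR_one_left y⟩
  | mul x₂ x₁ _ _ ih2 ih1 =>
    obtain ⟨c, hc1, d, hd1, e1, l1⟩ := ih1 y hy
    obtain ⟨c', hc2, d', hd2, e2, l2⟩ := ih2 c hc1
    exact ⟨c', hc2, d' * d, mul_mem hd2 hd1, lcmR_comp hc e1 l1 e2 l2⟩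

end GarsideHelpers

/-- if `M` is a cancellative noetherian monoid whose left and right
divisibilities are partial orders, with Garside element `Δ`, and `δ ∈ Div(Δ)` is
balanced with `M_δ ∩ Div(Δ) = Div(δ)` where `M_δ` is the submonoid generated by
`Div(δ)`, then `M_δ` is itself a Garside monoid with Garside element `δ`. -/
theorem parabolic_submonoid_garside {M : Type*} [Monoid M]
    (hcanc : CancellativeMonoid M) (hnoeth : NoetherianMonoid M)
    (hLantisymm : ∀ a b : M, LDvd a b → LDvd b a → a = b)
    (hRantisymm : ∀ a b : M, RDvd a b → RDvd b a → a = b)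
    (Δ : M) (hGarside : IsGarsideMonoidWith Δ)
    (hlcms : ∀ a ∈ LDiv Δ, ∀ b ∈ LDiv Δ, (∃ l, IsLcmL a b l) ∧ (∃ l, IsLcmR a b l))
    (δ : M) (hδΔ : δ ∈ LDiv Δ) (hδbal : BalancedElem δ)
    (hpar : (Submonoid.closure (LDiv δ) : Set M) ∩ LDiv Δ = LDiv δ) :
    IsGarsideMonoidWith
      (⟨δ, Submonoid.subset_closure ⟨1, (mul_one δ).symm⟩⟩ :
        Submonoid.closure (LDiv δ)) := by
  have cl : ∀ x y t : M, x * y = x * t → y = t := fun x y t h =>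
    hcanc x y 1 t (by simpa using h)
  have cr : ∀ x y t : M, y * x = t * x → y = t := fun x y t h =>
    hcanc 1 y x t (by simpa using h)
  obtain ⟨⟨-, -, hL, hR⟩, -, -⟩ := hGarside
  have LR : ∀ a, LDvd a δ ↔ RDvd a δ := fun a => Set.ext_iff.mp hδbal a
  have hDL : ∀ x ∈ LDiv δ, ∀ y ∈ LDiv δ, ∃ c ∈ LDiv δ, ∃ d ∈ LDiv δ,
      x * c = y * d ∧ IsLcmL x y (x * c) := by
    intro x hx y hy
    obtain ⟨l, hl⟩ := (hL x y).1 ⟨δ, hx, hy⟩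
    obtain ⟨k, hk⟩ := (LR l).1 (hl.2.2 δ hx hy)
    obtain ⟨c, rfl⟩ := hl.1
    obtain ⟨d, hd⟩ := hl.2.1
    exact ⟨c, (LR c).2 ⟨k * x, by rw [hk, mul_assoc]⟩, d,
      (LR d).2 ⟨k * y, by rw [hk, hd, mul_assoc]⟩, hd, hl⟩
  have hDR : ∀ x ∈ LDiv δ, ∀ y ∈ LDiv δ, ∃ c ∈ LDiv δ, ∃ d ∈ LDiv δ,
      c * x = d * y ∧ IsLcmR x y (c * x) := by
    intro x hx y hy
    have hx' := (LR x).1 hx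
    have hy' := (LR y).1 hy
    obtain ⟨l, hl⟩ := (hR x y).1 ⟨δ, hx', hy'⟩
    obtain ⟨k, hk⟩ := (LR l).2 (hl.2.2 δ hx' hy')
    obtain ⟨c, rfl⟩ := hl.1
    obtain ⟨d, hd⟩ := hl.2.1
    exact ⟨c, ⟨x * k, by rw [hk, mul_assoc]⟩, d,
      ⟨y * k, by rw [hk, hd, mul_assoc]⟩, hd, hl⟩
  have gridL_δ := gridL cl (LDiv δ) hDL
  have gridR_δ := gridR cr (LDiv δ) hDR
  have upL : ∀ a b : Submonoid.closure (LDiv δ), LDvd (a : M) b ↔ LDvd a b := by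
    intro a b
    constructor
    · intro hab
      obtain ⟨c, hc, d, hd, e, h⟩ := gridL_δ a a.2 b b.2
      refine ⟨⟨c, hc⟩, Subtype.ext ?_⟩
      exact hLantisymm _ _ h.2.1 (h.2.2 _ hab ⟨1, by simp⟩)
    · rintro ⟨c, rfl⟩
      exact ⟨c, rfl⟩
  have upR : ∀ a b : Submonoid.closure (LDiv δ), RDvd (a : M) b ↔ RDvd a b := by
    intro a b
    constructor
    · intro hab
      obtain ⟨c, hc, d, hd, e, h⟩ := gridR_δ a a.2 b b.2
      refine ⟨⟨c, hc⟩, Subtype.ext ?_⟩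
      exact hRantisymm _ _ h.2.1 (h.2.2 _ hab ⟨1, by simp⟩)
    · rintro ⟨c, rfl⟩
      exact ⟨c, rfl⟩
  refine ⟨⟨?_, ⟨?_, ?_⟩, ?_, ?_⟩, ?_, ?_⟩
  · intro x y z t h
    exact Subtype.ext (hcanc x y z t (congrArg Subtype.val h))
  · refine Subrelation.wf ?_ (InvImage.wf (Subtype.val : Submonoid.closure (LDiv δ) → M) hnoeth.1)
    intro a b h
    exact ⟨(upL a b).2 h.1, fun h' => h.2 ((upL b a).1 h')⟩
  · refine Subrelation.wf ?_ (InvImage.wf (Subtype.val : Submonoid.closure (LDiv δ) → M) hnoeth.2)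
    intro a b h
    exact ⟨(upR a b).2 h.1, fun h' => h.2 ((upR b a).1 h')⟩
  · intro a b
    refine ⟨fun _ => ?_, fun ⟨l, h⟩ => ⟨l, h.1, h.2.1⟩⟩
    obtain ⟨c, hc, d, hd, e, h⟩ := gridL_δ a a.2 b b.2
    refine ⟨a * ⟨c, hc⟩, ⟨_, rfl⟩, ⟨⟨d, hd⟩, Subtype.ext e⟩, fun m h1 h2 => (upL _ _).1 ?_⟩
    exact h.2.2 m ((upL _ _).2 h1) ((upL _ _).2 h2)
  · intro a b
    refine ⟨fun _ => ?_, fun ⟨l, h⟩ => ⟨l, h.1, h.2.1⟩⟩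
    obtain ⟨c, hc, d, hd, e, h⟩ := gridR_δ a a.2 b b.2
    refine ⟨⟨c, hc⟩ * a, ⟨_, rfl⟩, ⟨⟨d, hd⟩, Subtype.ext e⟩, fun m h1 h2 => (upR _ _).1 ?_⟩
    exact h.2.2 m ((upR _ _).2 h1) ((upR _ _).2 h2)
  · ext a
    exact (upL a ⟨δ, _⟩).symm.trans ((LR a).trans (upR a ⟨δ, _⟩))
  · rw [← Submonoid.closure_closure_coe_preimage (s := LDiv δ)]
    congr 1
    ext a
    exact (upL a _).symm
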